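/- FO(<,◁) has the Crane Beach property: for every finite alphabet Σ, every language L ⊆ Σ* that has a neutral letter e ∈ Σ and is definable by a first-order sentence over word structures with built-in predicates < and ◁ is already definable by a first-order sentence over word structures with built-in predicate < only. That is, if there is a sentence φ over the language with binary relation symbols for < and ◁ and a unary symbol Q_σ for each σ ∈ Σ such that every nonempty word w satisfies w ∈ L iff the word structure of w models φ, then there is a sentence ψ over the language with only the binary relation symbol for < and the unary symbols Q_σ such that every nonempty word w satisfies w ∈ L iff the word structure of w models ψ. -/

import Mathlib

open FirstOrder Language

/-- `q_i = i(i+1)/2`, the smallest element of column `i`. -/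
def qseq (i : ℕ) : ℕ := i * (i + 1) / 2

/-- `c(x)`, the column number of `x`: the largest `i` with `q_i ≤ x`. -/
def col (x : ℕ) : ℕ := Nat.findGreatest (fun i => qseq i ≤ x) x

/-- `q(x) = q_{c(x)}`, the bottom-most element of the column of `x`. -/
def qf (x : ℕ) : ℕ := qseq (col x)

/-- `r(x) = x - q(x)`, the row number of `x`. -/
def rowf (x : ℕ) : ℕ := x - qf x

/-- The row-major linear order `◁`. -/
def ordc (x y : ℕ) : Prop := rowf x < rowf y ∨ (rowf x = rowf y ∧ col x < col y)

/-- Relation symbols of the word-structure language with built-in `<` and `◁`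
and a unary letter predicate `Q_σ` for each letter `σ` of the alphabet `A`. -/
inductive WordRel (A : Type) : ℕ → Type
  | lt : WordRel A 2
  | ordc : WordRel A 2
  | letter : A → WordRel A 1

/-- The word-structure language with built-in predicates `<` and `◁`. -/
def LWord (A : Type) : Language := ⟨fun _ => Empty, WordRel A⟩

/-- Relation symbols of the word-structure language with built-in `<` only. -/
inductive WordRelLt (A : Type) : ℕ → Type
  | lt : WordRelLt A 2
  | letter : A → WordRelLt A 1

/-- The word-structure language with built-in predicate `<` only. -/
def LWordLt (A : Type) : Language := ⟨fun _ => Empty, WordRelLt A⟩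

/-- The word structure of a word `w`, with built-in predicates `<` and `◁`:
universe `{0,...,|w|-1}`, `Q_σ` interpreted as the positions carrying `σ`. -/
def wordStruct (A : Type) (w : List A) : (LWord A).Structure (Fin w.length) where
  funMap := fun f _ => f.elim
  RelMap := fun r v =>
    match r with
    | .lt => (v 0 : ℕ) < (v 1 : ℕ)
    | .ordc => ordc (v 0 : ℕ) (v 1 : ℕ)
    | .letter σ => w.get (v 0) = σ

/-- The word structure of a word `w`, with built-in predicate `<` only. -/
def wordStructLt (A : Type) (w : List A) : (LWordLt A).Structure (Fin w.length) where
  funMap := fun f _ => f.elim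
  RelMap := fun r v =>
    match r with
    | .lt => (v 0 : ℕ) < (v 1 : ℕ)
    | .letter σ => w.get (v 0) = σ

/-!
Replace each letter `w_c` of a word `w` of length `m` by `e^c w_c`. By neutrality of `e` this does
not change membership in `L`, and it makes `w_c` occupy column `c`, so that the positions of the
padded word correspond to the pairs `(c, r)` with `r ≤ c < m` through `q_c + r`. Both `<` and `◁`
are lexicographic orders in these coordinates. Hence the padded word, with `<` and `◁`, is
first-order interpretable in `w`, with `<` alone, on pairs of positions, and the sentence `φ` about
the padded word pulls back to a sentence about `w`.
-/

/-! ### Injective interpretations -/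

section Interpretation

universe u v u' v' w x y z

/-- The value of `termVar t` is the variable that is the term `t` of a relational language. -/
def termVar {L : FirstOrder.Language.{u, v}} [L.IsRelational] {α : Type w} : L.Term α → α
  | .var a => a
  | .func f _ => isEmptyElim f

theorem realize_eq_apply_termVar {L : FirstOrder.Language.{u, v}} [L.IsRelational] {α : Type w}
    {M : Type x} [L.Structure M] (t : L.Term α) (f : α → M) : t.realize f = f (termVar t) := by
  cases t with
  | var a => rfl
  | func f _ => exact isEmptyElim f

/-- A syntactic interpretation of the language `L` in the language `L'`, in which elements are
represented by `ι`-indexed tuples: a formula for the tuples that represent an element, and one for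
each relation symbol. There is no formula for equality, because each element is meant to be
represented by a single tuple. -/
structure Interpretation (L : FirstOrder.Language.{u, v}) (L' : FirstOrder.Language.{u', v'})
    (ι : Type w) where
  domain : L'.Formula ι
  rel : ∀ {n : ℕ}, L.Relations n → L'.Formula (Fin n × ι)

namespace Interpretation

variable {L : FirstOrder.Language.{u, v}} {L' : FirstOrder.Language.{u', v'}} {ι : Type w}

/-- `I.IsRealizedBy enc` says that `enc` is an isomorphism of `M` onto the `L`-structure which `I`
defines on tuples of elements of `N`. -/
structure IsRealizedBy (I : Interpretation L L' ι) {M : Type x} {N : Type y} [L.Structure M]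
    [L'.Structure N] (enc : M → ι → N) : Prop where
  injective : Function.Injective enc
  realize_domain : ∀ t : ι → N, I.domain.Realize t ↔ t ∈ Set.range enc
  realize_rel : ∀ {n : ℕ} (R : L.Relations n) (a : Fin n → M),
    (I.rel R).Realize (fun p => enc (a p.1) p.2) ↔ Structure.RelMap R a

section SplitLast

variable {α : Type z} {n : ℕ}

/-- Separates the tuple of variables that stands for the last of `n + 1` indexed variables, over
which a quantifier ranges, from the tuples that stand for the other variables. -/
def splitLast : (α ⊕ Fin (n + 1)) × ι → ((α ⊕ Fin n) × ι) ⊕ ι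
  | (.inl a, i) => .inl (.inl a, i)
  | (.inr k, i) => Fin.lastCases (.inr i) (fun k => .inl (.inr k, i)) k

theorem elim_splitLast {M : Type x} {N : Type y} (enc : M → ι → N) (f : α → M) (b : Fin n → M)
    (a : M) (p : (α ⊕ Fin (n + 1)) × ι) :
    Sum.elim (fun q => enc (Sum.elim f b q.1) q.2) (enc a) (splitLast p) =
      enc (Sum.elim f (Fin.snoc b a : Fin (n + 1) → M) p.1) p.2 := by
  rcases p with ⟨c | k, i⟩
  · rfl
  · induction k using Fin.lastCases with
    | last => simp only [splitLast, Fin.lastCases_last, Sum.elim_inr, Fin.snoc_last]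
    | cast k =>
      simp only [splitLast, Fin.lastCases_castSucc, Sum.elim_inl, Sum.elim_inr, Fin.snoc_castSucc]

end SplitLast

variable [L.IsRelational] [Finite ι] {α : Type z}

/-- The pullback of an `L`-formula along an interpretation: each variable `a` becomes the tuple of
variables `(a, i)`, and quantifiers are relativized to the domain. -/
noncomputable def translate (I : Interpretation L L' ι) :
    ∀ {n : ℕ}, L.BoundedFormula α n → L'.Formula ((α ⊕ Fin n) × ι)
  | _, .falsum => ⊥
  | _, .equal t₁ t₂ =>
    Formula.iInf fun i => (Term.var (termVar t₁, i)).equal (Term.var (termVar t₂, i))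
  | _, .rel R ts => (I.rel R).relabel (Prod.map (termVar ∘ ts) id)
  | _, .imp φ ψ => (I.translate φ).imp (I.translate ψ)
  | _, .all φ =>
    Formula.iAlls ι ((I.domain.relabel Sum.inr).imp ((I.translate φ).relabel splitLast))

/-- The pullback of an `L`-sentence along an interpretation. -/
noncomputable def translateSentence (I : Interpretation L L' ι) (φ : L.Sentence) : L'.Sentence :=
  Formula.relabel (fun p => isEmptyElim p.1) (I.translate φ)

variable {I : Interpretation L L' ι} {M : Type x} {N : Type y} [L.Structure M] [L'.Structure N]
  {enc : M → ι → N}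

theorem IsRealizedBy.realize_translate (h : I.IsRealizedBy enc) {n : ℕ}
    (φ : L.BoundedFormula α n) (f : α → M) (b : Fin n → M) :
    (I.translate φ).Realize (fun p => enc (Sum.elim f b p.1) p.2) ↔ φ.Realize f b := by
  induction φ with
  | falsum =>
    rw [translate]
    rfl
  | equal t₁ t₂ =>
    simp only [translate, Formula.realize_iInf, Formula.realize_equal, Term.realize_var,
      BoundedFormula.Realize, realize_eq_apply_termVar, ← h.injective.eq_iff, funext_iff]
  | rel R ts =>
    simp only [translate, Formula.realize_relabel, BoundedFormula.Realize,
      realize_eq_apply_termVar, ← h.realize_rel]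
    rfl
  | imp φ ψ ihφ ihψ =>
    simp only [translate, Formula.realize_imp, BoundedFormula.realize_imp, ihφ, ihψ]
  | all φ ih =>
    simp only [translate, Formula.realize_iAlls, Formula.realize_imp, Formula.realize_relabel,
      BoundedFormula.realize_all, ← ih]
    simp only [Function.comp_def, elim_splitLast, Sum.elim_inr, h.realize_domain,
      Set.forall_mem_range]

theorem IsRealizedBy.realize_translateSentence (h : I.IsRealizedBy enc) (φ : L.Sentence) :
    N ⊨ I.translateSentence φ ↔ M ⊨ φ := by
  have hφ : φ.Realize M ↔ (I.translate φ).Realize fun p => enc (Sum.elim default default p.1) p.2 :=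
    (h.realize_translate φ default default).symm
  rw [Sentence.Realize, translateSentence, Formula.realize_relabel, hφ]
  exact iff_of_eq (congrArg _ (funext fun p => isEmptyElim p.1))

end Interpretation

end Interpretation

/-! ### Column and row coordinates -/

theorem qseq_succ (i : ℕ) : qseq (i + 1) = qseq i + (i + 1) := by
  have h : (i + 1) * (i + 1 + 1) = i * (i + 1) + (i + 1) * 2 := by ring
  rw [qseq, h, Nat.add_mul_div_right _ _ two_pos, qseq]

theorem qseq_strictMono : StrictMono qseq :=
  strictMono_nat_of_lt_succ fun i => by rw [qseq_succ]; omega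

theorem gc_qseq_col : GaloisConnection qseq col := by
  intro i x
  refine ⟨fun h => Nat.le_findGreatest ((qseq_strictMono.le_apply).trans h) h, fun h => ?_⟩
  have hcol : qseq (col x) ≤ x :=
    Nat.findGreatest_spec (P := fun i => qseq i ≤ x) (Nat.zero_le x) (Nat.zero_le x)
  exact (qseq_strictMono.monotone h).trans hcol

theorem col_lt_iff_lt_qseq {x m : ℕ} : col x < m ↔ x < qseq m :=
  gc_qseq_col.lt_iff_lt.symm

theorem qseq_col_add_rowf (x : ℕ) : qseq (col x) + rowf x = x :=
  Nat.add_sub_of_le (gc_qseq_col.l_u_le x)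

theorem rowf_le_col (x : ℕ) : rowf x ≤ col x := by
  have h : x < qseq (col x + 1) := col_lt_iff_lt_qseq.1 (Nat.lt_succ_self _)
  have hx := qseq_col_add_rowf x
  rw [qseq_succ] at h
  omega

theorem col_qseq_add {c r : ℕ} (h : r ≤ c) : col (qseq c + r) = c := by
  refine le_antisymm (Nat.lt_succ_iff.1 (col_lt_iff_lt_qseq.2 ?_))
    ((gc_qseq_col _ _).1 (Nat.le_add_right _ _))
  rw [qseq_succ]
  omega

theorem rowf_qseq_add {c r : ℕ} (h : r ≤ c) : rowf (qseq c + r) = r := by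
  rw [rowf, qf, col_qseq_add h, Nat.add_sub_cancel_left]

theorem lt_iff_col_rowf_lex {x y : ℕ} :
    x < y ↔ col x < col y ∨ col x = col y ∧ rowf x < rowf y := by
  have hx := qseq_col_add_rowf x
  have hy := qseq_col_add_rowf y
  rcases lt_trichotomy (col x) (col y) with h | h | h
  · simp only [h, true_or, iff_true]
    exact gc_qseq_col.monotone_u.reflect_lt h
  · rw [h] at hx
    omega
  · have hyx : y < x := gc_qseq_col.monotone_u.reflect_lt h
    omega

/-! ### Padding words -/

section Padding

variable {A : Type}

/-- `e` is a neutral letter for `L`: inserting or deleting it preserves membership. -/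
def IsNeutralLetter (L : Set (List A)) (e : A) : Prop :=
  ∀ w₁ w₂ : List A, w₁ ++ w₂ ∈ L ↔ w₁ ++ e :: w₂ ∈ L

theorem IsNeutralLetter.append_replicate_append_mem_iff {L : Set (List A)} {e : A}
    (h : IsNeutralLetter L e) (w₁ w₂ : List A) (k : ℕ) :
    w₁ ++ (List.replicate k e ++ w₂) ∈ L ↔ w₁ ++ w₂ ∈ L := by
  induction k with
  | zero => rfl
  | succ k ih => rw [List.replicate_succ, List.cons_append, ← h, ih]

/-- The padding of `w`: column `c` of the padded word carries the letter `w_c` on top of `c` copies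
of `e`. The letter goes to the top row `r = c` rather than to the bottom row `r = 0` because `r = c`
is an atomic formula in the coordinates, whereas `r = 0` would need a quantifier. -/
def pad (e : A) (w : List A) : List A :=
  (w.mapIdx fun c a => List.replicate c e ++ [a]).flatten

theorem pad_concat (e : A) (w : List A) (a : A) :
    pad e (w ++ [a]) = pad e w ++ (List.replicate w.length e ++ [a]) := by
  simp only [pad, List.mapIdx_concat, List.flatten_concat]

theorem IsNeutralLetter.pad_mem_iff {L : Set (List A)} {e : A} (h : IsNeutralLetter L e)
    (w : List A) : pad e w ∈ L ↔ w ∈ L := by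
  suffices ∀ w₂, pad e w ++ w₂ ∈ L ↔ w ++ w₂ ∈ L by simpa only [List.append_nil] using this []
  induction w using List.reverseRecOn with
  | nil => exact fun _ => Iff.rfl
  | append_singleton w a ih =>
    intro w₂
    rw [pad_concat, List.append_assoc, List.append_assoc, h.append_replicate_append_mem_iff, ih,
      List.append_assoc]

theorem length_pad (e : A) (w : List A) : (pad e w).length = qseq w.length := by
  induction w using List.reverseRecOn with
  | nil => simp [pad, qseq]
  | append_singleton w a ih =>
    simp only [pad_concat, List.length_append, List.length_replicate, List.length_singleton, ih,
      qseq_succ]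

theorem pad_ne_nil {e : A} {w : List A} (hw : w ≠ []) : pad e w ≠ [] := by
  rw [← List.length_pos_iff, length_pad]
  exact (List.length_pos_iff.2 hw).trans_le qseq_strictMono.le_apply

theorem getElem?_pad (e : A) {w : List A} {x : ℕ} (hx : x < (pad e w).length) :
    (pad e w)[x]? = if rowf x = col x then w[col x]? else some e := by
  induction w using List.reverseRecOn with
  | nil => exact absurd hx (Nat.not_lt_zero x)
  | append_singleton w a ih =>
    rw [pad_concat]
    by_cases hxw : x < (pad e w).length
    · have hcol : col x < w.length := by rwa [col_lt_iff_lt_qseq, ← length_pad e]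
      rw [List.getElem?_append_left hxw, List.getElem?_append_left hcol, ih hxw]
    · have hcol : col x = w.length := by
        rw [length_pad, ← col_lt_iff_lt_qseq] at hx hxw
        simp only [List.length_append, List.length_singleton] at hx
        omega
      have hrow : x - (pad e w).length = rowf x := by rw [length_pad, ← hcol]; rfl
      rw [List.getElem?_append_right (not_lt.1 hxw), hrow, hcol, List.getElem?_concat_length]
      split_ifs with h
      · simp [h]
      · have hlt : rowf x < w.length := lt_of_le_of_ne (hcol ▸ rowf_le_col x) h
        rw [List.getElem?_append_left (by simpa), List.getElem?_replicate_of_lt hlt]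

end Padding

/-! ### Interpreting the padded word -/

section WordInterpretation

variable {A : Type}

local instance (w : List A) : (LWord A).Structure (Fin w.length) := wordStruct A w

local instance (w : List A) : (LWordLt A).Structure (Fin w.length) := wordStructLt A w

instance : (LWord A).IsRelational := fun _ => inferInstanceAs (IsEmpty Empty)

/-- The formula `x < y`. -/
def ltFormula {α : Type*} (x y : α) : (LWordLt A).Formula α :=
  Relations.formula₂ (L := LWordLt A) (r := WordRelLt.lt) (Term.var x) (Term.var y)

/-- The formula `Q_a(x)`. -/
def letterFormula {α : Type*} (a : A) (x : α) : (LWordLt A).Formula α :=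
  Relations.formula₁ (L := LWordLt A) (r := WordRelLt.letter a) (Term.var x)

/-- The formula `x = y`. -/
def eqFormula {α : Type*} (x y : α) : (LWordLt A).Formula α :=
  Term.equal (Term.var x) (Term.var y)

/-- The formula saying that `(x₁, x₂)` is lexicographically smaller than `(y₁, y₂)`. -/
def lexLtFormula {α : Type*} (x₁ x₂ y₁ y₂ : α) : (LWordLt A).Formula α :=
  ltFormula x₁ y₁ ⊔ (eqFormula x₁ y₁ ⊓ ltFormula x₂ y₂)

section Realize

variable {w : List A} {α : Type*} {v : α → Fin w.length}

theorem realize_ltFormula {x y : α} : (ltFormula (A := A) x y).Realize v ↔ v x < v y :=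
  Iff.rfl

theorem realize_letterFormula {a : A} {x : α} :
    (letterFormula a x).Realize v ↔ w.get (v x) = a :=
  Iff.rfl

theorem realize_eqFormula {x y : α} : (eqFormula (A := A) x y).Realize v ↔ v x = v y := by
  rw [eqFormula, Formula.realize_equal, Term.realize_var, Term.realize_var]

theorem realize_lexLtFormula {x₁ x₂ y₁ y₂ : α} :
    (lexLtFormula (A := A) x₁ x₂ y₁ y₂).Realize v ↔
      v x₁ < v y₁ ∨ v x₁ = v y₁ ∧ v x₂ < v y₂ := by
  rw [lexLtFormula, Formula.realize_sup, Formula.realize_inf, realize_ltFormula, realize_ltFormula,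
    realize_eqFormula]

end Realize

open Classical in
/-- The interpretation of `pad e w` in `w`. A position is represented by the pair of its column
(coordinate `0`) and its row (coordinate `1`). -/
noncomputable def padInterpretation (e : A) : Interpretation (LWord A) (LWordLt A) (Fin 2) where
  domain := (ltFormula 0 1).not
  rel R := match R with
    | .lt => lexLtFormula (0, 0) (0, 1) (1, 0) (1, 1)
    | .ordc => lexLtFormula (0, 1) (0, 0) (1, 1) (1, 0)
    | .letter a =>
      if e = a then (eqFormula (0, 1) (0, 0)).imp (letterFormula a (0, 0))
      else eqFormula (0, 1) (0, 0) ⊓ letterFormula a (0, 0)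

/-- The pair of positions of `w` that represents a position of `pad e w`. -/
def padCoord (e : A) (w : List A) (x : Fin (pad e w).length) : Fin 2 → Fin w.length :=
  have hcol : col x < w.length := col_lt_iff_lt_qseq.2 (x.2.trans_eq (length_pad e w))
  ![⟨col x, hcol⟩, ⟨rowf x, (rowf_le_col x).trans_lt hcol⟩]

theorem padCoord_injective (e : A) (w : List A) : Function.Injective (padCoord e w) := by
  intro x y h
  have hcol : col x = col y := congrArg (fun t => (t 0 : ℕ)) h
  have hrow : rowf x = rowf y := congrArg (fun t => (t 1 : ℕ)) h
  rw [Fin.ext_iff, ← qseq_col_add_rowf x, ← qseq_col_add_rowf y, hcol, hrow]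

theorem mem_range_padCoord {e : A} {w : List A} {t : Fin 2 → Fin w.length} :
    t ∈ Set.range (padCoord e w) ↔ t 1 ≤ t 0 := by
  constructor
  · rintro ⟨x, rfl⟩
    exact rowf_le_col x
  · intro h
    have hlt : qseq (t 0) + t 1 < (pad e w).length := by
      rw [length_pad, ← col_lt_iff_lt_qseq, col_qseq_add h]
      exact (t 0).2
    refine ⟨⟨_, hlt⟩, funext fun i => Fin.ext ?_⟩
    fin_cases i
    · exact col_qseq_add h
    · exact rowf_qseq_add h

theorem get_pad (e : A) (w : List A) (x : Fin (pad e w).length) :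
    (pad e w).get x =
      if padCoord e w x 1 = padCoord e w x 0 then w.get (padCoord e w x 0) else e := by
  have h := getElem?_pad e x.2
  have hcol : col x < w.length := (padCoord e w x 0).2
  have hdiag : padCoord e w x 1 = padCoord e w x 0 ↔ rowf x = col x := Fin.ext_iff
  rw [List.getElem?_eq_getElem x.2, List.getElem?_eq_getElem hcol, ← apply_ite some] at h
  simp only [hdiag]
  exact Option.some_injective _ h

theorem isRealizedBy_padInterpretation (e : A) (w : List A) :
    (padInterpretation e).IsRealizedBy (padCoord e w) where
  injective := padCoord_injective e w
  realize_domain t := by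
    rw [mem_range_padCoord, padInterpretation, Formula.realize_not, realize_ltFormula, not_lt]
  realize_rel R x := by
    cases R with
    | lt =>
      refine (realize_lexLtFormula (A := A)).trans ?_
      simp only [Fin.ext_iff, Fin.lt_def]
      exact lt_iff_col_rowf_lex.symm
    | ordc =>
      refine (realize_lexLtFormula (A := A)).trans ?_
      simp only [Fin.ext_iff, Fin.lt_def]
      rfl
    | letter a =>
      change _ ↔ (pad e w).get (x 0) = a
      rw [get_pad]
      by_cases ha : e = a <;> by_cases htop : padCoord e w (x 0) 1 = padCoord e w (x 0) 0 <;>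
        simp [padInterpretation, realize_eqFormula, realize_letterFormula, ha, htop]

theorem craneBeach_lt_ordc_general (A : Type) (L : Set (List A)) (e : A)
    (hneutral : ∀ w₁ w₂ : List A, w₁ ++ w₂ ∈ L ↔ w₁ ++ e :: w₂ ∈ L)
    (φ : (LWord A).Sentence)
    (hφ : ∀ w : List A, w ≠ [] →
      (w ∈ L ↔ (letI := wordStruct A w; Fin w.length ⊨ φ))) :
    ∃ ψ : (LWordLt A).Sentence, ∀ w : List A, w ≠ [] →
      (w ∈ L ↔ (letI := wordStructLt A w; Fin w.length ⊨ ψ)) := by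
  refine ⟨(padInterpretation e).translateSentence φ, fun w hw => ?_⟩
  rw [← IsNeutralLetter.pad_mem_iff hneutral w, hφ _ (pad_ne_nil hw)]
  exact ((isRealizedBy_padInterpretation e w).realize_translateSentence φ).symm

end WordInterpretation

/-- Theorem 4.1, main step: `FO(<,◁)` has the Crane Beach property.
If a language `L` over a finite alphabet has a neutral letter `e` and is defined by an
`FO(<,◁)`-sentence `φ` on word structures, then it is defined by an `FO(<)`-sentence. -/
theorem craneBeach_lt_ordc (A : Type) [Fintype A] (L : Set (List A)) (e : A)
    (hneutral : ∀ w₁ w₂ : List A, w₁ ++ w₂ ∈ L ↔ w₁ ++ e :: w₂ ∈ L)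
    (φ : (LWord A).Sentence)
    (hφ : ∀ w : List A, w ≠ [] →
      (w ∈ L ↔ (letI := wordStruct A w; Fin w.length ⊨ φ))) :
    ∃ ψ : (LWordLt A).Sentence, ∀ w : List A, w ≠ [] →
      (w ∈ L ↔ (letI := wordStructLt A w; Fin w.length ⊨ ψ)) :=
  craneBeach_lt_ordc_general A L e hneutral φ hφ
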